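/- In the bivariate skew normal setting, suppose B(u) → 0 as u → 0⁺. Then A₁(u) → -∞ and P₁(u) ~ √(1-ρ²)·e^{-A₁(u)²/(2(1-ρ²))} / (2·√(2π)·|A₁(u)|·Φ(λ₂·Q₂(u))) as u → 0⁺, where f ~ g means f/g → 1. -/

import Mathlib

/-!
`B(u) → 0` is a condition on the ratio of the two quantiles: since both tend to `-∞` and `α₁ ≠ 0`,
`Q₁ / Q₂ → r := -α₂ / α₁`, and `r ≥ 0` because both quantiles are eventually negative.

For `A₁ → -∞` it suffices that `r > ρ`, as `A₁ = Q₂ (Q₁ / Q₂ - ρ)`. The left tail of `SN(l)` has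
Gaussian exponent `(1 + max l 0 ^ 2) / 2` (`le_snCDF`, `snCDF_le`), so comparing `F₁(Q₁) = F₂(Q₂)`
on the logarithmic scale yields `1 + max λ₂ 0 ^ 2 ≤ r² (1 + max λ₁ 0 ^ 2)` (`tail_exponent_le`).
With the given `λ₁, λ₂` this inequality is false when `0 ≤ r ≤ ρ < 1` (`tail_exponent_lt`).

For the asymptotics, put `a = |A₁|`, `v = 1 - ρ²` and substitute `z = Q₁ - t / a`
(`integral_Iic_eq_rescaled`). The Gaussian factor becomes `exp (-a² / (2v))` times
`exp (-t / v - (t / a)² / (2v))`, and `Φ` is evaluated at `B - α₁ t / a → 0`. By dominated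
convergence the remaining integral tends to `∫₀^∞ exp (-t / v) Φ(0) dt = v / 2`
(`tendsto_rescaled_integral`), which gives the constant in the claim.
-/

open Real Filter Topology MeasureTheory

/-- The standard normal cumulative distribution function. -/
noncomputable def stdNormalCDF (x : ℝ) : ℝ :=
  ∫ t in Set.Iic x, (Real.sqrt (2 * Real.pi))⁻¹ * Real.exp (-(t ^ 2) / 2)

/-- The cdf of the skew normal distribution `SN(l)`. -/
noncomputable def snCDF (l : ℝ) (x : ℝ) : ℝ :=
  ∫ t in Set.Iic x,
    2 * ((Real.sqrt (2 * Real.pi))⁻¹ * Real.exp (-(t ^ 2) / 2)) * stdNormalCDF (l * t)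

/-! ### The standard normal distribution -/

/-- The standard normal density, in the form in which it occurs in `stdNormalCDF` and `snCDF`. -/
noncomputable def gaussDensity (t : ℝ) : ℝ :=
  (Real.sqrt (2 * Real.pi))⁻¹ * Real.exp (-(t ^ 2) / 2)

lemma gaussDensity_pos (t : ℝ) : 0 < gaussDensity t := by
  unfold gaussDensity; positivity

lemma continuous_gaussDensity : Continuous gaussDensity := by
  unfold gaussDensity; fun_prop

lemma integrable_gaussDensity : Integrable gaussDensity := by
  have h := (integrable_exp_neg_mul_sq (b := 1 / 2) (by norm_num)).const_mul
    (Real.sqrt (2 * Real.pi))⁻¹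
  refine h.congr (Eventually.of_forall fun t => ?_)
  simp only [gaussDensity]
  congr 2; ring

lemma integral_gaussDensity : ∫ t, gaussDensity t = 1 := by
  have h : ∀ t, gaussDensity t = (Real.sqrt (2 * Real.pi))⁻¹ * Real.exp (-(1 / 2) * t ^ 2) := by
    intro t; simp only [gaussDensity]; congr 2; ring
  simp_rw [h]
  rw [integral_const_mul, integral_gaussian, show Real.pi / (1 / 2) = 2 * Real.pi by ring]
  exact inv_mul_cancel₀ (by positivity)

lemma stdNormalCDF_eq (x : ℝ) : stdNormalCDF x = ∫ t in Set.Iic x, gaussDensity t := rfl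

lemma stdNormalCDF_nonneg (x : ℝ) : 0 ≤ stdNormalCDF x :=
  integral_nonneg fun t => (gaussDensity_pos t).le

lemma stdNormalCDF_mono : Monotone stdNormalCDF := fun _ _ hxy =>
  setIntegral_mono_set integrable_gaussDensity.integrableOn
    (Eventually.of_forall fun t => (gaussDensity_pos t).le)
    (Set.Iic_subset_Iic.2 hxy).eventuallyLE

lemma stdNormalCDF_le_one (x : ℝ) : stdNormalCDF x ≤ 1 := by
  rw [stdNormalCDF_eq, ← integral_gaussDensity]
  exact setIntegral_le_integral integrable_gaussDensity
    (Eventually.of_forall fun t => (gaussDensity_pos t).le)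

lemma stdNormalCDF_zero : stdNormalCDF 0 = 1 / 2 := by
  have h1 : ∫ t in Set.Iic (0 : ℝ), gaussDensity t = ∫ t in Set.Ioi (0 : ℝ), gaussDensity t := by
    have := integral_comp_neg_Iic 0 gaussDensity
    simpa [gaussDensity] using this
  have h2 := intervalIntegral.integral_Iic_add_Ioi (b := (0 : ℝ))
    integrable_gaussDensity.integrableOn integrable_gaussDensity.integrableOn
  rw [integral_gaussDensity, ← h1] at h2
  rw [stdNormalCDF_eq]; linarith

lemma continuous_stdNormalCDF : Continuous stdNormalCDF := by
  have h : stdNormalCDF = fun x => stdNormalCDF 0 + ∫ t in (0 : ℝ)..x, gaussDensity t := by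
    funext x
    rw [← intervalIntegral.integral_Iic_sub_Iic integrable_gaussDensity.integrableOn
      integrable_gaussDensity.integrableOn, stdNormalCDF_eq, stdNormalCDF_eq]
    ring
  rw [h]
  exact continuous_const.add (intervalIntegral.continuous_primitive
    (fun a b => integrable_gaussDensity.intervalIntegrable) 0)

/-- On the left half-line the tail mass exceeds that of the unit interval ending at `x`, on which
the density is at least its value at `x - 1`. -/
lemma gaussDensity_le_stdNormalCDF {x : ℝ} (hx : x ≤ 0) :
    gaussDensity (x - 1) ≤ stdNormalCDF x := by
  have h1 : ∫ t in Set.Ioc (x - 1) x, gaussDensity (x - 1) ≤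
      ∫ t in Set.Ioc (x - 1) x, gaussDensity t := by
    refine setIntegral_mono_on (by simp) integrable_gaussDensity.integrableOn
      measurableSet_Ioc fun t ht => ?_
    unfold gaussDensity
    have : t ^ 2 ≤ (x - 1) ^ 2 := by nlinarith [ht.1, ht.2]
    gcongr
  have h2 : ∫ t in Set.Ioc (x - 1) x, gaussDensity t ≤ stdNormalCDF x :=
    setIntegral_mono_set integrable_gaussDensity.integrableOn
      (Eventually.of_forall fun t => (gaussDensity_pos t).le)
      Set.Ioc_subset_Iic_self.eventuallyLE
  simp at h1
  linarith

lemma stdNormalCDF_pos (x : ℝ) : 0 < stdNormalCDF x :=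
  (gaussDensity_pos _).trans_le
    ((gaussDensity_le_stdNormalCDF (min_le_right x 0)).trans (stdNormalCDF_mono (min_le_left x 0)))

/-- Chernoff-type bound on the left tail; it follows from `t² ≥ x² + (t - x)²` for `t ≤ x ≤ 0`. -/
lemma stdNormalCDF_le_exp {x : ℝ} (hx : x ≤ 0) : stdNormalCDF x ≤ Real.exp (-(x ^ 2) / 2) := by
  have hi : Integrable fun t => Real.exp (-(x ^ 2) / 2) * gaussDensity (t - x) :=
    (integrable_gaussDensity.comp_sub_right x).const_mul _
  calc stdNormalCDF x ≤ ∫ t in Set.Iic x, Real.exp (-(x ^ 2) / 2) * gaussDensity (t - x) := by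
        refine setIntegral_mono_on integrable_gaussDensity.integrableOn hi.integrableOn
          measurableSet_Iic fun t ht => ?_
        have ht' : t ≤ x := ht
        unfold gaussDensity
        rw [mul_left_comm, ← Real.exp_add]
        gcongr
        nlinarith [mul_nonneg (sub_nonneg.2 ht') (neg_nonneg.2 hx)]
    _ ≤ ∫ t, Real.exp (-(x ^ 2) / 2) * gaussDensity (t - x) :=
        setIntegral_le_integral hi (Eventually.of_forall fun t =>
          mul_nonneg (Real.exp_pos _).le (gaussDensity_pos _).le)
    _ = Real.exp (-(x ^ 2) / 2) := by
        rw [integral_const_mul, integral_sub_right_eq_self gaussDensity, integral_gaussDensity,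
          mul_one]

/-! ### Tails and quantiles of the skew normal distribution -/

lemma snCDF_eq (l x : ℝ) :
    snCDF l x = ∫ t in Set.Iic x, 2 * gaussDensity t * stdNormalCDF (l * t) := rfl

lemma integrable_snDensity (l : ℝ) :
    Integrable fun t => 2 * gaussDensity t * stdNormalCDF (l * t) := by
  refine (integrable_gaussDensity.const_mul 2).mul_bdd (c := 1) ?_ ?_
  · exact (continuous_stdNormalCDF.comp (continuous_const_mul l)).aestronglyMeasurable
  · refine Eventually.of_forall fun t => ?_
    rw [Real.norm_of_nonneg (stdNormalCDF_nonneg _)]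
    exact stdNormalCDF_le_one _

lemma snDensity_pos (l t : ℝ) : 0 < 2 * gaussDensity t * stdNormalCDF (l * t) :=
  mul_pos (mul_pos two_pos (gaussDensity_pos t)) (stdNormalCDF_pos _)

lemma snCDF_mono (l : ℝ) : Monotone (snCDF l) := fun _ _ hxy =>
  setIntegral_mono_set (integrable_snDensity l).integrableOn
    (Eventually.of_forall fun t => (snDensity_pos l t).le)
    (Set.Iic_subset_Iic.2 hxy).eventuallyLE

/-- Lower tail bound for `SN(l)`, of exponential order `(1 + max l 0 ^ 2) x² / 2`. -/
lemma le_snCDF (l : ℝ) {x : ℝ} (hx : x ≤ 0) :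
    2 * gaussDensity (x - 1) * gaussDensity (max l 0 * (x - 1) - 1) ≤ snCDF l x := by
  have h1 : ∫ t in Set.Ioc (x - 1) x,
        2 * gaussDensity (x - 1) * gaussDensity (max l 0 * (x - 1) - 1) ≤
      ∫ t in Set.Ioc (x - 1) x, 2 * gaussDensity t * stdNormalCDF (l * t) := by
    refine setIntegral_mono_on (integrableOn_const (by simp)) (integrable_snDensity l).integrableOn
      measurableSet_Ioc fun t ht => ?_
    have e1 : gaussDensity (x - 1) ≤ gaussDensity t := by
      unfold gaussDensity
      have : t ^ 2 ≤ (x - 1) ^ 2 := by nlinarith [ht.1, ht.2]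
      gcongr
    have hm : 0 ≤ max l 0 := le_max_right _ _
    have e2 : gaussDensity (max l 0 * (x - 1) - 1) ≤ stdNormalCDF (l * t) := by
      refine (gaussDensity_le_stdNormalCDF
        (mul_nonpos_of_nonneg_of_nonpos hm (by linarith))).trans (stdNormalCDF_mono ?_)
      have ht0 : t ≤ 0 := ht.2.trans hx
      nlinarith [le_max_left l 0, ht.1]
    have := gaussDensity_pos t
    exact mul_le_mul (by linarith) e2 (gaussDensity_pos _).le (by linarith)
  have h2 : ∫ t in Set.Ioc (x - 1) x, 2 * gaussDensity t * stdNormalCDF (l * t) ≤ snCDF l x :=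
    setIntegral_mono_set (integrable_snDensity l).integrableOn
      (Eventually.of_forall fun t => (snDensity_pos l t).le)
      Set.Ioc_subset_Iic_self.eventuallyLE
  simp at h1
  linarith

lemma snCDF_pos (l x : ℝ) : 0 < snCDF l x :=
  (mul_pos (mul_pos two_pos (gaussDensity_pos _)) (gaussDensity_pos _)).trans_le
    ((le_snCDF l (min_le_right x 0)).trans (snCDF_mono l (min_le_left x 0)))

/-- Upper tail bound for `SN(l)`, of the same exponential order as in `le_snCDF`. -/
lemma snCDF_le (l : ℝ) {x : ℝ} (hx : x ≤ 0) :
    snCDF l x ≤ 2 * Real.exp (-((1 + max l 0 ^ 2) * x ^ 2) / 2) := by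
  set m := max l 0 with hm
  have hi : Integrable fun t =>
      2 * Real.exp (-((1 + m ^ 2) * x ^ 2) / 2) * gaussDensity (t - x) :=
    (integrable_gaussDensity.comp_sub_right x).const_mul _
  have key : ∀ t ≤ 0, stdNormalCDF (l * t) ≤ Real.exp (-((m * t) ^ 2) / 2) := by
    intro t ht
    rcases le_total l 0 with h | h
    · rw [hm, max_eq_right h]; simpa using stdNormalCDF_le_one _
    · rw [hm, max_eq_left h]
      exact stdNormalCDF_le_exp (mul_nonpos_of_nonneg_of_nonpos h ht)
  calc snCDF l x
      ≤ ∫ t in Set.Iic x, 2 * Real.exp (-((1 + m ^ 2) * x ^ 2) / 2) * gaussDensity (t - x) := by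
        refine setIntegral_mono_on (integrable_snDensity l).integrableOn hi.integrableOn
          measurableSet_Iic fun t ht => ?_
        have ht' : t ≤ x := ht
        have ht0 : t ≤ 0 := ht'.trans hx
        refine (mul_le_mul_of_nonneg_left (key t ht0)
          (mul_nonneg two_pos.le (gaussDensity_pos t).le)).trans ?_
        unfold gaussDensity
        have e1 : ∀ k b c : ℝ, 2 * (k * b) * c = 2 * k * (b * c) := by intros; ring
        have e2 : ∀ k b c : ℝ, 2 * b * (k * c) = 2 * k * (b * c) := by intros; ring
        rw [e1, e2 (Real.sqrt (2 * Real.pi))⁻¹, ← Real.exp_add, ← Real.exp_add]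
        refine mul_le_mul_of_nonneg_left (Real.exp_le_exp.2 ?_) (by positivity)
        have h1 : x ^ 2 + (t - x) ^ 2 ≤ t ^ 2 := by
          nlinarith [mul_nonneg (sub_nonneg.2 ht') (neg_nonneg.2 hx)]
        have h2 : x ^ 2 ≤ t ^ 2 := by nlinarith
        nlinarith [mul_le_mul_of_nonneg_left h2 (sq_nonneg m)]
    _ ≤ ∫ t, 2 * Real.exp (-((1 + m ^ 2) * x ^ 2) / 2) * gaussDensity (t - x) :=
        setIntegral_le_integral hi (Eventually.of_forall fun t =>
          mul_nonneg (mul_pos two_pos (Real.exp_pos _)).le (gaussDensity_pos _).le)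
    _ = _ := by
        rw [integral_const_mul, integral_sub_right_eq_self gaussDensity, integral_gaussDensity,
          mul_one]

lemma snQuantile_tendsto_atBot {l : ℝ} {Q : ℝ → ℝ}
    (hQ : ∀ u ∈ Set.Ioo (0 : ℝ) 1, snCDF l (Q u) = u) : Tendsto Q (𝓝[>] (0 : ℝ)) atBot := by
  refine tendsto_atBot.2 fun M => ?_
  have hpos : 0 < min (snCDF l M) 1 := lt_min (snCDF_pos l M) one_pos
  filter_upwards [Ioo_mem_nhdsGT hpos] with u hu
  by_contra! h
  have h1 := snCDF_mono l h.le
  rw [hQ u ⟨hu.1, hu.2.trans_le (min_le_right _ _)⟩] at h1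
  exact absurd (hu.2.trans_le (min_le_left _ _)) (not_lt.2 h1)

/-- If equal-level quantiles of `SN(l₁)` and `SN(l₂)` have asymptotic ratio `r`, the Gaussian tail
exponents must be compatible. -/
lemma tail_exponent_le {ι : Type*} {f : Filter ι} [f.NeBot] {l₁ l₂ r : ℝ} {q₁ q₂ : ι → ℝ}
    (h₁ : Tendsto q₁ f atBot) (h₂ : Tendsto q₂ f atBot)
    (heq : ∀ᶠ i in f, snCDF l₁ (q₁ i) = snCDF l₂ (q₂ i))
    (hr : Tendsto (fun i => q₁ i / q₂ i) f (𝓝 r)) :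
    1 + max l₂ 0 ^ 2 ≤ r ^ 2 * (1 + max l₁ 0 ^ 2) := by
  set m₁ := max l₁ 0
  set m₂ := max l₂ 0
  -- Logarithms of `le_snCDF` and `snCDF_le`, compared at a common level.
  have hlog : ∀ᶠ i in f, (1 + m₂ ^ 2) * q₂ i ^ 2 ≤
      (q₁ i - 1) ^ 2 + (m₁ * (q₁ i - 1) - 1) ^ 2 + 2 * Real.log (2 * Real.pi) := by
    filter_upwards [heq, h₁.eventually_le_atBot 0, h₂.eventually_le_atBot 0] with i hi h1 h2
    have h := (le_snCDF l₁ h1).trans (hi.le.trans (snCDF_le l₂ h2))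
    have hc : (Real.sqrt (2 * Real.pi))⁻¹ * (Real.sqrt (2 * Real.pi))⁻¹ = (2 * Real.pi)⁻¹ := by
      rw [← mul_inv, Real.mul_self_sqrt (by positivity)]
    have e : 2 * gaussDensity (q₁ i - 1) * gaussDensity (m₁ * (q₁ i - 1) - 1) =
        2 * Real.exp (-Real.log (2 * Real.pi) + (-((q₁ i - 1) ^ 2) / 2 +
          -((m₁ * (q₁ i - 1) - 1) ^ 2) / 2)) := by
      rw [Real.exp_add, Real.exp_add, Real.exp_neg, Real.exp_log (by positivity), ← hc]
      unfold gaussDensity; ring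
    rw [e, mul_le_mul_iff_right₀ two_pos, Real.exp_le_exp] at h
    linarith
  have hinv : Tendsto (fun i => (q₂ i)⁻¹) f (𝓝 0) := tendsto_inv_atBot_zero.comp h₂
  have hlim : Tendsto (fun i => (q₁ i / q₂ i - (q₂ i)⁻¹) ^ 2 +
      (m₁ * (q₁ i / q₂ i - (q₂ i)⁻¹) - (q₂ i)⁻¹) ^ 2 +
      2 * Real.log (2 * Real.pi) * (q₂ i)⁻¹ ^ 2) f
      (𝓝 ((r - 0) ^ 2 + (m₁ * (r - 0) - 0) ^ 2 + 2 * Real.log (2 * Real.pi) * 0 ^ 2)) :=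
    (((hr.sub hinv).pow 2).add ((((hr.sub hinv).const_mul m₁).sub hinv).pow 2)).add
      ((hinv.pow 2).const_mul _)
  have := ge_of_tendsto (b := 1 + m₂ ^ 2) hlim (by
    filter_upwards [hlog, h₂.eventually_lt_atBot 0] with i hi h2
    have h3 : 0 < q₂ i ^ 2 := sq_pos_of_neg h2
    rw [← mul_le_mul_iff_left₀ h3]
    refine hi.trans (le_of_eq ?_)
    have := h2.ne
    field_simp)
  linarith

/-- Algebraic core of `A₁ → -∞`: with `α₂ = -r α₁` and `0 ≤ r ≤ ρ` the tail exponents of the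
two margins violate `tail_exponent_le`. For `α₁ < 0` no margin has a thinner tail than the normal,
while for `α₁ > 0` both exponents share the factor `1 + α₁² (1 + r² - 2 ρ r)`. -/
lemma tail_exponent_lt {ρ r a l₁ l₂ : ℝ} (hρ : ρ < 1) (hr0 : 0 ≤ r) (hrρ : r ≤ ρ) (ha : a ≠ 0)
    (hl₁ : l₁ = (a + ρ * (-r * a)) / Real.sqrt (1 + (-r * a) ^ 2 * (1 - ρ ^ 2)))
    (hl₂ : l₂ = ((-r * a) + ρ * a) / Real.sqrt (1 + a ^ 2 * (1 - ρ ^ 2))) :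
    r ^ 2 * (1 + max l₁ 0 ^ 2) < 1 + max l₂ 0 ^ 2 := by
  have hv : 0 < 1 - ρ ^ 2 := by nlinarith
  have hr1 : r ^ 2 < 1 := by nlinarith
  have hρr : 0 < 1 - ρ * r := by nlinarith
  have hD₁ : 0 < 1 + (-r * a) ^ 2 * (1 - ρ ^ 2) := by positivity
  have hD₂ : 0 < 1 + a ^ 2 * (1 - ρ ^ 2) := by positivity
  rcases lt_or_gt_of_ne ha with h | h
  · have : l₁ ≤ 0 := by
      rw [hl₁]; exact div_nonpos_of_nonpos_of_nonneg (by nlinarith) (Real.sqrt_nonneg _)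
    rw [max_eq_right this]
    nlinarith [sq_nonneg (max l₂ 0)]
  · have h1 : 0 ≤ l₁ := by
      rw [hl₁]; exact div_nonneg (by nlinarith) (Real.sqrt_nonneg _)
    have h2 : 0 ≤ l₂ := by
      rw [hl₂]; exact div_nonneg (by nlinarith) (Real.sqrt_nonneg _)
    rw [max_eq_left h1, max_eq_left h2, hl₁, hl₂, div_pow, div_pow, Real.sq_sqrt hD₁.le,
      Real.sq_sqrt hD₂.le]
    have hN : 0 < 1 + a ^ 2 * (1 + r ^ 2 - 2 * ρ * r) := by
      have : 0 ≤ 1 + r ^ 2 - 2 * ρ * r := by nlinarith [sq_nonneg (r - 1)]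
      positivity
    have e1 : 1 + (a + ρ * (-r * a)) ^ 2 / (1 + (-r * a) ^ 2 * (1 - ρ ^ 2)) =
        (1 + a ^ 2 * (1 + r ^ 2 - 2 * ρ * r)) / (1 + (-r * a) ^ 2 * (1 - ρ ^ 2)) := by
      rw [eq_div_iff hD₁.ne', add_mul, div_mul_cancel₀ _ hD₁.ne']; ring
    have e2 : 1 + (-r * a + ρ * a) ^ 2 / (1 + a ^ 2 * (1 - ρ ^ 2)) =
        (1 + a ^ 2 * (1 + r ^ 2 - 2 * ρ * r)) / (1 + a ^ 2 * (1 - ρ ^ 2)) := by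
      rw [eq_div_iff hD₂.ne', add_mul, div_mul_cancel₀ _ hD₂.ne']; ring
    rw [e1, e2, ← mul_div_assoc, div_lt_div_iff₀ hD₁ hD₂]
    nlinarith [mul_pos hN (sub_pos.2 hr1)]

/-! ### Laplace-type asymptotics at the endpoint -/

/-- Dominated convergence for the rescaled conditional integral: at scale `1 / a` the Gaussian
density near the endpoint looks like `exp (-t / v)` and `Φ` like its value `1 / 2` at `0`. -/
lemma tendsto_rescaled_integral {ι : Type*} {f : Filter ι} [f.IsCountablyGenerated] {v : ℝ}
    (hv : 0 < v) (α : ℝ) {a b : ι → ℝ} (ha : Tendsto a f atTop) (hb : Tendsto b f (𝓝 0)) :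
    Tendsto (fun i => ∫ t in Set.Ioi (0 : ℝ),
      Real.exp (-t / v - (t / a i) ^ 2 / (2 * v)) * stdNormalCDF (b i - α * (t / a i)))
      f (𝓝 (v / 2)) := by
  have hval : ∫ t in Set.Ioi (0 : ℝ), Real.exp (-t / v) * (1 / 2) = v / 2 := by
    have h := integral_exp_mul_Ioi (a := -v⁻¹) (by simpa using hv) 0
    rw [integral_mul_const]
    have e : (fun t : ℝ => Real.exp (-t / v)) = fun t => Real.exp (-v⁻¹ * t) := by
      funext t; congr 1; ring
    rw [e, h]; simp; ring
  rw [← hval]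
  refine tendsto_integral_filter_of_dominated_convergence (fun t => Real.exp (-t / v)) ?_ ?_ ?_ ?_
  · refine Eventually.of_forall fun i => Continuous.aestronglyMeasurable ?_
    exact (by fun_prop : Continuous fun t : ℝ => Real.exp (-t / v - (t / a i) ^ 2 / (2 * v))).mul
      (continuous_stdNormalCDF.comp (by fun_prop))
  · refine Eventually.of_forall fun i => Eventually.of_forall fun t => ?_
    rw [Real.norm_of_nonneg (mul_nonneg (Real.exp_pos _).le (stdNormalCDF_nonneg _))]
    refine (mul_le_of_le_one_right (Real.exp_pos _).le (stdNormalCDF_le_one _)).trans ?_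
    rw [Real.exp_le_exp]
    have : 0 ≤ (t / a i) ^ 2 / (2 * v) := by positivity
    linarith
  · have h := integrableOn_exp_mul_Ioi (a := -v⁻¹) (by simpa using hv) 0
    refine h.congr (Eventually.of_forall fun t => ?_)
    simp only
    congr 1; ring
  · refine Eventually.of_forall fun t => ?_
    have h0 : Tendsto (fun i => t / a i) f (𝓝 0) := ha.const_div_atTop t
    have h1 : Tendsto (fun i => stdNormalCDF (b i - α * (t / a i))) f (𝓝 (1 / 2)) := by
      rw [← stdNormalCDF_zero]
      refine (continuous_stdNormalCDF.tendsto 0).comp ?_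
      simpa using hb.sub (h0.const_mul α)
    have h2 : Tendsto (fun i => Real.exp (-t / v - (t / a i) ^ 2 / (2 * v))) f
        (𝓝 (Real.exp (-t / v))) := by
      refine (Real.continuous_exp.tendsto _).comp ?_
      simpa using ((h0.pow 2).div_const (2 * v)).const_sub (-t / v)
    exact h2.mul h1

/-- The change of variables `z = q - t / a`. -/
lemma integral_Iic_eq_rescaled (g : ℝ → ℝ) (q : ℝ) {a : ℝ} (ha : 0 < a) :
    ∫ z in Set.Iic q, g z = a⁻¹ * ∫ t in Set.Ioi (0 : ℝ), g (q - t / a) := by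
  rw [← integral_Ici_eq_integral_Ioi, ← integral_indicator measurableSet_Iic,
    ← integral_indicator measurableSet_Ici]
  have h1 : (Set.Ici (0 : ℝ)).indicator (fun t => g (q - t / a)) =
      fun t => (fun s => (Set.Iic q).indicator g (q - s)) (t / a) := by
    funext t
    have : q - t / a ≤ q ↔ 0 ≤ t := by
      rw [sub_le_self_iff]; exact ⟨fun h => by simpa [ha.ne'] using mul_nonneg h ha.le,
        fun h => by positivity⟩
    simp [Set.indicator_apply, this]
  rw [h1, Measure.integral_comp_div, integral_sub_left_eq_self ((Set.Iic q).indicator g),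
    abs_of_pos ha, smul_eq_mul, inv_mul_cancel_left₀ ha.ne']

/-! ### The conditional probability -/

/-- Theorem 2(b) of the paper: if `B(u) → 0` then `A₁(u) → -∞` and
`P₁(u) ~ √(1-ρ²)·e^{-A₁(u)²/(2(1-ρ²))} / (2√(2π)·|A₁(u)|·Φ(λ₂Q₂(u)))`. -/
theorem conditional_prob_asymptotics_B_zero (ρ α₁ α₂ : ℝ)
    (hρ : ρ ∈ Set.Ioo (-1 : ℝ) 1) (hα₁ : α₁ ≠ 0) (l₁ l₂ : ℝ)
    (hl₁ : l₁ = (α₁ + ρ * α₂) / Real.sqrt (1 + α₂ ^ 2 * (1 - ρ ^ 2)))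
    (hl₂ : l₂ = (α₂ + ρ * α₁) / Real.sqrt (1 + α₁ ^ 2 * (1 - ρ ^ 2)))
    (Q₁ Q₂ : ℝ → ℝ)
    (hQ₁ : ∀ u ∈ Set.Ioo (0 : ℝ) 1, snCDF l₁ (Q₁ u) = u)
    (hQ₂ : ∀ u ∈ Set.Ioo (0 : ℝ) 1, snCDF l₂ (Q₂ u) = u)
    (hB : Tendsto (fun u => α₁ * Q₁ u + α₂ * Q₂ u) (𝓝[>] (0 : ℝ)) (𝓝 0)) :
    Tendsto (fun u => Q₁ u - ρ * Q₂ u) (𝓝[>] (0 : ℝ)) atBot ∧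
    Tendsto (fun u =>
      (∫ z in Set.Iic (Q₁ u),
        (Real.sqrt (2 * Real.pi * (1 - ρ ^ 2)))⁻¹ *
          Real.exp (-(z - ρ * Q₂ u) ^ 2 / (2 * (1 - ρ ^ 2))) *
          (stdNormalCDF (α₁ * z + α₂ * Q₂ u) / stdNormalCDF (l₂ * Q₂ u))) /
      (Real.sqrt (1 - ρ ^ 2) *
          Real.exp (-(Q₁ u - ρ * Q₂ u) ^ 2 / (2 * (1 - ρ ^ 2))) /
        (2 * Real.sqrt (2 * Real.pi) * |Q₁ u - ρ * Q₂ u| *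
          stdNormalCDF (l₂ * Q₂ u))))
      (𝓝[>] (0 : ℝ)) (𝓝 1) := by
  have hv : 0 < 1 - ρ ^ 2 := by nlinarith [hρ.1, hρ.2]
  have t₁ := snQuantile_tendsto_atBot hQ₁
  have t₂ := snQuantile_tendsto_atBot hQ₂
  obtain ⟨r, hr⟩ : ∃ r, r = -(α₂ / α₁) := ⟨_, rfl⟩
  have hα₂ : α₂ = -r * α₁ := by rw [hr]; field_simp
  have hratio : Tendsto (fun u => Q₁ u / Q₂ u) (𝓝[>] (0 : ℝ)) (𝓝 r) := by
    have h := ((hB.const_mul α₁⁻¹).mul (tendsto_inv_atBot_zero.comp t₂)).const_add r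
    simp only [mul_zero, add_zero] at h
    refine h.congr' ?_
    filter_upwards [t₂.eventually_lt_atBot 0] with u hu
    have := hu.ne
    simp only [Function.comp, hα₂]
    field_simp
    ring
  have hr0 : 0 ≤ r := ge_of_tendsto hratio (by
    filter_upwards [t₁.eventually_le_atBot 0, t₂.eventually_le_atBot 0] with u h1 h2
    exact div_nonneg_of_nonpos h1 h2)
  have hρr : ρ < r := by
    by_contra! h
    -- Both quantiles are taken at the same level `u`, so the tail comparison applies.
    refine absurd (tail_exponent_le t₁ t₂ ?_ hratio)
      (not_le.2 (tail_exponent_lt hρ.2 hr0 h hα₁ (hα₂ ▸ hl₁) (hα₂ ▸ hl₂)))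
    filter_upwards [Ioo_mem_nhdsGT one_pos] with u hu
    rw [hQ₁ u hu, hQ₂ u hu]
  have hA : Tendsto (fun u => Q₁ u - ρ * Q₂ u) (𝓝[>] (0 : ℝ)) atBot := by
    refine (t₂.atBot_mul_pos (sub_pos.2 hρr) (hratio.sub_const ρ)).congr' ?_
    filter_upwards [t₂.eventually_lt_atBot 0] with u hu
    have := hu.ne
    field_simp
  refine ⟨hA, ?_⟩
  have hlim := (tendsto_rescaled_integral hv α₁ (tendsto_neg_atBot_atTop.comp hA) hB).const_mul
    (2 / (1 - ρ ^ 2))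
  rw [show 2 / (1 - ρ ^ 2) * ((1 - ρ ^ 2) / 2) = 1 by field_simp] at hlim
  refine hlim.congr' ?_
  filter_upwards [hA.eventually_lt_atBot 0] with u hu
  have ha : 0 < -(Q₁ u - ρ * Q₂ u) := by linarith
  simp only [Function.comp]
  rw [integral_Iic_eq_rescaled _ _ ha, abs_of_neg hu]
  have hΦ := stdNormalCDF_pos (l₂ * Q₂ u)
  obtain ⟨a, hadef⟩ : ∃ a, a = -(Q₁ u - ρ * Q₂ u) := ⟨_, rfl⟩
  have e : ∀ t, (Real.sqrt (2 * Real.pi * (1 - ρ ^ 2)))⁻¹ *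
          Real.exp (-(Q₁ u - t / a - ρ * Q₂ u) ^ 2 / (2 * (1 - ρ ^ 2))) *
          (stdNormalCDF (α₁ * (Q₁ u - t / a) + α₂ * Q₂ u) / stdNormalCDF (l₂ * Q₂ u)) =
      ((Real.sqrt (2 * Real.pi * (1 - ρ ^ 2)))⁻¹ *
        Real.exp (-(Q₁ u - ρ * Q₂ u) ^ 2 / (2 * (1 - ρ ^ 2))) / stdNormalCDF (l₂ * Q₂ u)) *
      (Real.exp (-t / (1 - ρ ^ 2) - (t / a) ^ 2 / (2 * (1 - ρ ^ 2))) *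
        stdNormalCDF (α₁ * Q₁ u + α₂ * Q₂ u - α₁ * (t / a))) := by
    intro t
    have e1 : -(Q₁ u - t / a - ρ * Q₂ u) ^ 2 / (2 * (1 - ρ ^ 2)) =
        -(Q₁ u - ρ * Q₂ u) ^ 2 / (2 * (1 - ρ ^ 2)) +
        (-t / (1 - ρ ^ 2) - (t / a) ^ 2 / (2 * (1 - ρ ^ 2))) := by
      have h1 : Q₁ u - ρ * Q₂ u = -a := by linarith
      have h2 : Q₁ u - t / a - ρ * Q₂ u = -a - t / a := by linarith
      have : a ≠ 0 := by rw [hadef]; exact ha.ne'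
      rw [h1, h2]
      field_simp
      ring
    rw [e1, Real.exp_add, show α₁ * (Q₁ u - t / a) + α₂ * Q₂ u =
      α₁ * Q₁ u + α₂ * Q₂ u - α₁ * (t / a) by ring]
    ring
  rw [← hadef] at ha ⊢
  simp_rw [e]
  rw [integral_const_mul, Real.sqrt_mul (by positivity) (1 - ρ ^ 2)]
  have hs : Real.sqrt (1 - ρ ^ 2) ≠ 0 := by positivity
  have hs2 : Real.sqrt (1 - ρ ^ 2) ^ 2 = 1 - ρ ^ 2 := Real.sq_sqrt hv.le
  have hp : Real.sqrt (2 * Real.pi) ≠ 0 := by positivity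
  have hE := (Real.exp_pos (-(Q₁ u - ρ * Q₂ u) ^ 2 / (2 * (1 - ρ ^ 2)))).ne'
  generalize Real.exp (-(Q₁ u - ρ * Q₂ u) ^ 2 / (2 * (1 - ρ ^ 2))) = E at *
  generalize (∫ t in Set.Ioi (0 : ℝ),
    Real.exp (-t / (1 - ρ ^ 2) - (t / a) ^ 2 / (2 * (1 - ρ ^ 2))) *
      stdNormalCDF (α₁ * Q₁ u + α₂ * Q₂ u - α₁ * (t / a))) = I
  generalize Real.sqrt (1 - ρ ^ 2) = s at *
  rw [← hs2]
  field_simp
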